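/- (Abstract-alphabet Hoeffding theorem, eq. (3.39)) Let (X, 𝒜) be a measurable space and let P and P̄ be mutually absolutely continuous probability measures on X with D(P‖P̄) < ∞ and D(P̄‖P) < ∞, where D denotes Kullback–Leibler divergence (natural logarithm). Let the null hypothesis be P_n = P^{⊗n} and the alternative hypothesis be Q_n = P̄^{⊗n} (n-fold product measures on X^n). Then for every r > 0, B_e(r) = inf{ D(Q‖P̄) : Q a probability measure on X with D(Q‖P) < r }. -/

import Mathlib

open MeasureTheory Filter
open scoped ENNReal NNReal

/-- The exponent `-(1/n) log p` of a nonneg extended real `p`, valued in `EReal`,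
with the conventions `-log 0 = +∞` and `-log ∞ = -∞`. -/
noncomputable def expRate (n : ℕ) (p : ℝ≥0∞) : EReal :=
  (((n : ℝ)⁻¹ : ℝ) : EReal) * (-(ENNReal.log p))

/-- The likelihood ratio `dμ/dν`, defined to be `+∞` on the part of the space where
`μ` is singular with respect to `ν` (μ-a.e.). -/
noncomputable def lratio {Ω : Type*} [MeasurableSpace Ω] (μ ν : Measure Ω) (x : Ω) : ℝ≥0∞ :=
  μ.rnDeriv (μ + ν) x / ν.rnDeriv (μ + ν) x

section Setup

variable {Ω : ℕ → Type*} [∀ n, MeasurableSpace (Ω n)]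

/-- `η(R) = liminf_n -(1/n) log P_n{ (1/n) log dP_n/dQ_n ≤ R }`. -/
noncomputable def eta (P Q : ∀ n, Measure (Ω n)) (R : ℝ) : EReal :=
  Filter.atTop.liminf fun n =>
    expRate n ((P n) {x | lratio (P n) (Q n) x ≤ ENNReal.ofReal (Real.exp (n * R))})

/-- `E` is `r`-achievable: there are measurable acceptance regions `A n` with
`liminf -(1/n) log μ_n ≥ r` and `liminf -(1/n) log λ_n ≥ E`. -/
def rAchievable (P Q : ∀ n, Measure (Ω n)) (r E : ℝ) : Prop :=
  ∃ A : ∀ n, Set (Ω n), (∀ n, MeasurableSet (A n)) ∧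
    (r : EReal) ≤ Filter.atTop.liminf (fun n => expRate n ((P n) (A n)ᶜ)) ∧
    (E : EReal) ≤ Filter.atTop.liminf (fun n => expRate n ((Q n) (A n)))

/-- The optimal error exponent `B_e(r)`: the supremum of all `r`-achievable `E`. -/
noncomputable def Be (P Q : ∀ n, Measure (Ω n)) (r : ℝ) : EReal :=
  sSup {x : EReal | ∃ E : ℝ, rAchievable P Q r E ∧ x = (E : EReal)}

end Setup

open scoped Classical

/-- The Kullback–Leibler divergence `D(Q‖P) = ∫ log (dQ/dP) dQ` (natural logarithm),
valued in `[0, ∞]`, equal to `+∞` unless `Q ≪ P` and the integrand is integrable. -/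
noncomputable def KLdiv {X : Type*} [MeasurableSpace X] (Q P : Measure X) : ℝ≥0∞ :=
  if Q ≪ P ∧ MeasureTheory.Integrable (fun x => Real.log (Q.rnDeriv P x).toReal) Q
  then ENNReal.ofReal (∫ x, Real.log ((Q.rnDeriv P x).toReal) ∂Q) else ⊤


lemma le_expRate_iff {n : ℕ} (hn : 0 < n) (c : ℝ) (p : ℝ≥0∞) :
    (c : EReal) ≤ expRate n p ↔ p ≤ ENNReal.ofReal (Real.exp (-(n * c))) := by
  have hn' : (0 : ℝ) < n := by exact_mod_cast hn
  rw [← ENNReal.log_le_log_iff, ENNReal.log_ofReal_of_pos (Real.exp_pos _), Real.log_exp, expRate]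
  induction h : ENNReal.log p with
  | bot =>
    simp [EReal.coe_mul_top_of_pos (inv_pos.mpr hn')]
  | top =>
    rw [EReal.neg_top, EReal.coe_mul_bot_of_pos (inv_pos.mpr hn')]
    simp only [le_bot_iff, top_le_iff, EReal.coe_ne_bot, EReal.coe_ne_top]
  | coe y =>
    rw [← EReal.coe_neg, ← EReal.coe_mul, EReal.coe_le_coe_iff, EReal.coe_le_coe_iff]
    rw [inv_mul_eq_div, le_div_iff₀ hn']
    constructor <;> intro h <;> linarith

lemma lintegral_pi_prod {X : Type*} [MeasurableSpace X] (μ : Measure X) [IsProbabilityMeasure μ]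
    (n : ℕ) (g : Fin n → X → ℝ≥0∞) (hg : ∀ i, Measurable (g i)) :
    ∫⁻ x, ∏ i, g i (x i) ∂(Measure.pi fun _ : Fin n => μ) = ∏ i, ∫⁻ y, g i y ∂μ := by
  have h := ProbabilityTheory.iIndepFun_pi (μ := fun _ : Fin n => μ) (X := g)
    (fun i => (hg i).aemeasurable)
  have h2 := ProbabilityTheory.lintegral_prod_eq_prod_lintegral_of_indepFun (Finset.univ)
    (fun i (x : Fin n → X) => g i (x i)) h (fun i => (hg i).comp (measurable_pi_apply i))
  rw [h2]
  refine Finset.prod_congr rfl fun i _ => ?_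
  exact (measurePreserving_eval (fun _ : Fin n => μ) i).lintegral_comp (hg i)

lemma pi_chernoff {X : Type*} [MeasurableSpace X] (μ : Measure X) [IsProbabilityMeasure μ]
    (f : X → ℝ) (hf : Measurable f) (hint : Integrable (fun x => Real.exp (f x)) μ) (c : ℝ) (n : ℕ) :
    (Measure.pi fun _ : Fin n => μ) {x | n * c ≤ ∑ i, f (x i)}
      ≤ ENNReal.ofReal (Real.exp (-(n * (c - Real.log (∫ x, Real.exp (f x) ∂μ))))) := by
  have hpos : 0 < ∫ x, Real.exp (f x) ∂μ := integral_exp_pos hint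
  set M := ∫ x, Real.exp (f x) ∂μ with hM
  have h1 : ∫⁻ x, ∏ i, ENNReal.ofReal (Real.exp (f (x i))) ∂(Measure.pi fun _ : Fin n => μ)
      = ENNReal.ofReal (M ^ n) := by
    rw [lintegral_pi_prod μ n (fun _ y => ENNReal.ofReal (Real.exp (f y))) (fun _ => by fun_prop),
      ← ofReal_integral_eq_lintegral_ofReal hint (Eventually.of_forall fun _ => (Real.exp_pos _).le)]
    rw [Finset.prod_const, Finset.card_univ, Fintype.card_fin, ENNReal.ofReal_pow hpos.le]
  have h2 := meas_ge_le_lintegral_div (μ := Measure.pi fun _ : Fin n => μ)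
    (f := fun x => ∏ i, ENNReal.ofReal (Real.exp (f (x i))))
    (Measurable.aemeasurable (by fun_prop))
    (ε := ENNReal.ofReal (Real.exp (n * c))) (by simp [Real.exp_pos]) (by simp)
  rw [h1, ← ENNReal.ofReal_div_of_pos (Real.exp_pos _)] at h2
  refine (measure_mono ?_).trans (h2.trans (le_of_eq ?_))
  · intro x hx
    simp only [Set.mem_ofPred_eq] at hx ⊢
    rw [← ENNReal.ofReal_prod_of_nonneg (fun _ _ => (Real.exp_pos _).le), ← Real.exp_sum]
    exact ENNReal.ofReal_le_ofReal (Real.exp_le_exp.mpr hx)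
  · congr 1
    rw [mul_sub, neg_sub, Real.exp_sub, Real.exp_nat_mul (Real.log M), Real.exp_log hpos]

lemma pi_withDensity' {X : Type*} [MeasurableSpace X] (P Q : Measure X) [IsProbabilityMeasure P]
    [IsProbabilityMeasure Q] (g : X → ℝ≥0∞) (hg : Measurable g) (h : Q = P.withDensity g) (n : ℕ) :
    (Measure.pi fun _ : Fin n => Q)
      = (Measure.pi fun _ : Fin n => P).withDensity (fun x => ∏ i, g (x i)) := by
  refine Measure.pi_eq fun s hs => ?_
  rw [withDensity_apply _ (MeasurableSet.univ_pi hs), ← lintegral_indicator (MeasurableSet.univ_pi hs)]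
  have : ∀ x : Fin n → X, (Set.univ.pi s).indicator (fun x => ∏ i, g (x i)) x
      = ∏ i, (s i).indicator g (x i) := by
    intro x
    by_cases hx : x ∈ Set.univ.pi s
    · rw [Set.indicator_of_mem hx]
      refine Finset.prod_congr rfl fun i _ => ?_
      rw [Set.indicator_of_mem (hx i trivial)]
    · rw [Set.indicator_of_notMem hx]
      simp only [Set.mem_pi, Set.mem_univ, forall_const, not_forall] at hx
      obtain ⟨i, hi⟩ := hx
      exact (Finset.prod_eq_zero (Finset.mem_univ i) (Set.indicator_of_notMem hi _)).symm
  simp_rw [this]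
  rw [lintegral_pi_prod P n (fun i => (s i).indicator g) (fun i => hg.indicator (hs i))]
  refine Finset.prod_congr rfl fun i _ => ?_
  rw [lintegral_indicator (hs i), h, withDensity_apply _ (hs i)]

lemma pi_wlln {X : Type*} [MeasurableSpace X] (Q : Measure X) [IsProbabilityMeasure Q]
    (L : X → ℝ) (hL : Measurable L) (hint : Integrable L Q) (c : ℝ) (hc : ∫ x, L x ∂Q < c) :
    Tendsto (fun n : ℕ => (Measure.pi fun _ : Fin n => Q) {x | n * c < ∑ i, L (x i)})
      atTop (nhds 0) := by
  set μ := Measure.infinitePi (fun _ : ℕ => Q) with hμ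
  have hmp : ∀ i : ℕ, MeasurePreserving (Function.eval i) μ Q := fun i =>
    measurePreserving_eval_infinitePi (fun _ : ℕ => Q) i
  have hid : ∀ i : ℕ, ProbabilityTheory.IdentDistrib (fun ω : ℕ → X => L (ω i))
      (fun ω => L (ω 0)) μ μ := by
    intro i
    refine ⟨Measurable.aemeasurable (by fun_prop), Measurable.aemeasurable (by fun_prop), ?_⟩
    have : ∀ j : ℕ, Measure.map (fun ω : ℕ → X => L (ω j)) μ = Measure.map L Q := by
      intro j
      rw [← (hmp j).map_eq, Measure.map_map hL (measurable_pi_apply j)]; rfl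
    rw [this, this]
  have hindep : ProbabilityTheory.iIndepFun (fun i (ω : ℕ → X) => L (ω i)) μ :=
    ProbabilityTheory.iIndepFun_infinitePi (X := fun _ : ℕ => L) (fun _ => hL)
  have hslln := ProbabilityTheory.strong_law_ae_real (fun i (ω : ℕ → X) => L (ω i))
    (((hmp 0).integrable_comp hint.aestronglyMeasurable).mpr hint)
    (fun i j hij => hindep.indepFun hij) hid
  have hexp : ∫ ω, L (ω 0) ∂μ = ∫ x, L x ∂Q := by
    rw [← (hmp 0).map_eq, integral_map (measurable_pi_apply 0).aemeasurable hL.aestronglyMeasurable]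
  simp only [hexp] at hslln
  have hm := tendstoInMeasure_of_tendsto_ae (f := fun (n : ℕ) (ω : ℕ → X) =>
    (∑ i ∈ Finset.range n, L (ω i)) / n) (g := fun _ => ∫ x, L x ∂Q) (fun n => by
      refine Measurable.aestronglyMeasurable ?_
      fun_prop) hslln
  have hm2 := (tendstoInMeasure_iff_dist.mp hm) (c - ∫ x, L x ∂Q) (by linarith)
  refine tendsto_of_tendsto_of_tendsto_of_le_of_le' tendsto_const_nhds hm2
    (Eventually.of_forall fun _ => zero_le) ?_
  filter_upwards [eventually_gt_atTop 0] with n hn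
  have hmap : Measure.map (fun (ω : ℕ → X) (i : Fin n) => ω i) μ = Measure.pi fun _ : Fin n => Q := by
    symm
    refine Measure.pi_eq fun s hs => ?_
    rw [Measure.map_apply (by fun_prop) (MeasurableSet.univ_pi hs)]
    have hpi := Measure.infinitePi_pi (fun _ : ℕ => Q) (s := Finset.range n)
      (t := fun i => if h : i < n then s ⟨i, h⟩ else Set.univ) (fun i hi => by
        simp only [Finset.mem_range] at hi
        simp [hi, hs])
    rw [Finset.prod_range] at hpi
    simp only [Fin.is_lt, dite_true] at hpi
    rw [← hpi]
    congr 1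
    ext ω
    simp only [Set.mem_preimage, Set.mem_pi, Set.mem_univ, forall_const, Finset.coe_range, Set.mem_Iio]
    constructor
    · intro h i hi
      simpa [hi] using h ⟨i, hi⟩
    · intro h i
      simpa using h i i.2
  rw [← hmap, Measure.map_apply (by fun_prop)
    (measurableSet_lt (by fun_prop) (by fun_prop))]
  refine measure_mono fun ω hω => ?_
  simp only [Set.mem_preimage, Set.mem_ofPred_eq] at hω ⊢
  have hn' : (0 : ℝ) < n := by exact_mod_cast hn
  rw [Finset.sum_range, Real.dist_eq]
  refine le_trans ?_ (le_abs_self _)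
  have : c ≤ (∑ i : Fin n, L (ω i)) / n := by
    rw [le_div_iff₀ hn']; linarith
  linarith

lemma converse_key {X : Type*} [MeasurableSpace X] (P Q : Measure X) [IsProbabilityMeasure P]
    [IsProbabilityMeasure Q] (hQP : Q ≪ P)
    (hint : Integrable (fun x => Real.log (Q.rnDeriv P x).toReal) Q) (c : ℝ)
    (hc : ∫ x, Real.log (Q.rnDeriv P x).toReal ∂Q < c)
    (B : ∀ n : ℕ, Set (Fin n → X)) (hB : ∀ n, MeasurableSet (B n))
    (hl : (c : EReal) ≤ atTop.liminf
      (fun n => expRate n ((Measure.pi fun _ : Fin n => P) (B n)))) :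
    Tendsto (fun n : ℕ => (Measure.pi fun _ : Fin n => Q) (B n)) atTop (nhds 0) := by
  set d := ∫ x, Real.log (Q.rnDeriv P x).toReal ∂Q with hd
  set L : X → ℝ := fun x => Real.log (Q.rnDeriv P x).toReal with hLdef
  have hL : Measurable L := by fun_prop
  set c1 := d + (c - d) / 3 with hc1
  set c2 := d + 2 * (c - d) / 3 with hc2
  have hw := pi_wlln Q L hL hint c1 (by simp only [← hd, hc1]; linarith)
  have hev : ∀ᶠ n : ℕ in atTop, (c2 : EReal) < expRate n ((Measure.pi fun _ : Fin n => P) (B n)) := by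
    refine eventually_lt_of_lt_liminf (lt_of_lt_of_le ?_ hl)
    rw [EReal.coe_lt_coe_iff, hc2]; linarith
  have hexp : Tendsto (fun n : ℕ => ENNReal.ofReal (Real.exp (-(n * (c2 - c1))))) atTop (nhds 0) := by
    have h0 : Tendsto (fun n : ℕ => Real.exp (-(n * (c2 - c1)))) atTop (nhds 0) := by
      refine Real.tendsto_exp_neg_atTop_nhds_zero.comp ?_
      refine Tendsto.atTop_mul_const ?_ tendsto_natCast_atTop_atTop
      rw [hc1, hc2]; linarith
    simpa using ENNReal.tendsto_ofReal h0
  have hsum := hexp.add hw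
  rw [add_zero] at hsum
  refine tendsto_of_tendsto_of_tendsto_of_le_of_le' tendsto_const_nhds hsum
    (Eventually.of_forall fun _ => zero_le) ?_
  filter_upwards [hev, eventually_gt_atTop 0] with n hn hn0
  have hPB := (le_expRate_iff hn0 c2 _).mp hn.le
  have hQd : Q = P.withDensity (fun x => ENNReal.ofReal (Q.rnDeriv P x).toReal) := by
    conv_lhs => rw [← Measure.withDensity_rnDeriv_eq Q P hQP]
    refine withDensity_congr_ae ?_
    filter_upwards [Measure.rnDeriv_lt_top Q P] with x hx
    rw [ENNReal.ofReal_toReal hx.ne]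
  have hpi := pi_withDensity' P Q _ (by fun_prop) hQd n
  set T : Set (Fin n → X) := {x | n * c1 < ∑ i, L (x i)} with hT
  have hTm : MeasurableSet T := measurableSet_lt (by fun_prop) (by fun_prop)
  have hsplit : (Measure.pi fun _ : Fin n => Q) (B n)
      ≤ (Measure.pi fun _ : Fin n => Q) (B n \ T) + (Measure.pi fun _ : Fin n => Q) T := by
    refine (measure_mono ?_).trans (measure_union_le _ _)
    intro x hx
    by_cases h : x ∈ T
    · exact Or.inr h
    · exact Or.inl ⟨hx, h⟩
  refine hsplit.trans (add_le_add ?_ le_rfl)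
  rw [hpi, withDensity_apply _ ((hB n).diff hTm)]
  have hbd : ∀ x ∈ B n \ T, (∏ i, ENNReal.ofReal (Q.rnDeriv P (x i)).toReal)
      ≤ ENNReal.ofReal (Real.exp (n * c1)) := by
    intro x hx
    have hx2 : ∑ i, L (x i) ≤ n * c1 := not_lt.mp hx.2
    calc (∏ i, ENNReal.ofReal (Q.rnDeriv P (x i)).toReal)
        ≤ ∏ i, ENNReal.ofReal (Real.exp (L (x i))) := by
          refine Finset.prod_le_prod' fun i _ => ENNReal.ofReal_le_ofReal ?_
          exact Real.le_exp_log _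
      _ = ENNReal.ofReal (Real.exp (∑ i, L (x i))) := by
          rw [Real.exp_sum, ENNReal.ofReal_prod_of_nonneg (fun _ _ => (Real.exp_pos _).le)]
      _ ≤ _ := ENNReal.ofReal_le_ofReal (Real.exp_le_exp.mpr hx2)
  calc _ ≤ ∫⁻ _ in B n \ T, ENNReal.ofReal (Real.exp (n * c1)) ∂(Measure.pi fun _ : Fin n => P) :=
        setLIntegral_mono (by fun_prop) hbd
    _ = ENNReal.ofReal (Real.exp (n * c1)) * (Measure.pi fun _ : Fin n => P) (B n \ T) := by
        rw [setLIntegral_const]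
    _ ≤ ENNReal.ofReal (Real.exp (n * c1)) * ENNReal.ofReal (Real.exp (-(n * c2))) := by
        gcongr
        exact (measure_mono Set.sdiff_subset).trans hPB
    _ = _ := by
        rw [← ENNReal.ofReal_mul (Real.exp_pos _).le, ← Real.exp_add]
        congr 2; ring

lemma KLdiv_of_affine {X : Type*} [MeasurableSpace X] (Q R : Measure X) [IsProbabilityMeasure Q]
    (hQR : Q ≪ R) (L : X → ℝ) (hL : Integrable L Q) (a b : ℝ)
    (h : (fun x => Real.log (Q.rnDeriv R x).toReal) =ᵐ[Q] fun x => a * L x + b) :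
    KLdiv Q R = ENNReal.ofReal (a * (∫ x, L x ∂Q) + b) := by
  have hi : Integrable (fun x => a * L x + b) Q := (hL.const_mul a).add (integrable_const b)
  rw [KLdiv, if_pos ⟨hQR, hi.congr h.symm⟩, integral_congr_ae h,
    integral_add (hL.const_mul a) (integrable_const b), integral_const_mul]
  simp

lemma exp_bound {s : ℝ} (hs : s ∈ Set.Icc (0 : ℝ) 1) (l : ℝ) :
    Real.exp (-s * l) ≤ 1 + Real.exp (-l) := by
  obtain ⟨h0, h1⟩ := hs
  rcases le_total 0 l with h | h
  · have : Real.exp (-s * l) ≤ 1 := Real.exp_le_one_iff.mpr (by nlinarith)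
    linarith [Real.exp_pos (-l)]
  · have : Real.exp (-s * l) ≤ Real.exp (-l) := Real.exp_le_exp.mpr (by nlinarith)
    linarith

section Tilt

variable {X : Type*} [MeasurableSpace X] (P Pb : Measure X) [IsProbabilityMeasure P]
  [IsProbabilityMeasure Pb]

/-- moment generating function of minus the log likelihood ratio -/
noncomputable def tM (s : ℝ) : ℝ := ∫ x, Real.exp (-s * llr P Pb x) ∂P

/-- minus its derivative -/
noncomputable def tN (s : ℝ) : ℝ := ∫ x, Real.exp (-s * llr P Pb x) * llr P Pb x ∂P

variable {P Pb}

lemma integrable_llr_P (hfin : KLdiv P Pb ≠ ⊤) : Integrable (llr P Pb) P := by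
  by_contra h
  exact hfin (if_neg fun h' => h h'.2)

lemma integrable_bound (hac' : Pb ≪ P) (hac : P ≪ Pb) :
    Integrable (fun x => 1 + Real.exp (-llr P Pb x)) P :=
  (integrable_const 1).add
    (Measure.integrable_toReal_rnDeriv.congr (exp_neg_llr hac).symm)

lemma integrable_bound' (hac' : Pb ≪ P) (hac : P ≪ Pb) (hfin : KLdiv P Pb ≠ ⊤)
    (hfin' : KLdiv Pb P ≠ ⊤) :
    Integrable (fun x => (1 + Real.exp (-llr P Pb x)) * |llr P Pb x|) P := by
  have h1 := integrable_llr_P hfin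
  have h2 : Integrable (llr P Pb) Pb :=
    ((integrable_llr_P hfin').neg).congr (neg_llr hac')
  have h3 := (integrable_rnDeriv_smul_iff hac').mpr h2.abs
  refine (h1.abs.add h3).congr ?_
  filter_upwards [exp_neg_llr hac] with x hx
  simp only [Pi.add_apply, smul_eq_mul, ← hx]
  ring

lemma integrable_exp_tilt (hac' : Pb ≪ P) (hac : P ≪ Pb) {s : ℝ} (hs : s ∈ Set.Icc (0 : ℝ) 1) :
    Integrable (fun x => Real.exp (-s * llr P Pb x)) P := by
  have := measurable_llr P Pb
  refine (integrable_bound hac' hac).mono' (Measurable.aestronglyMeasurable (by fun_prop))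
    (Eventually.of_forall fun x => ?_)
  rw [Real.norm_eq_abs, abs_of_pos (Real.exp_pos _)]
  exact exp_bound hs _

lemma integrable_exp_tilt_mul (hac' : Pb ≪ P) (hac : P ≪ Pb) (hfin : KLdiv P Pb ≠ ⊤)
    (hfin' : KLdiv Pb P ≠ ⊤) {s : ℝ} (hs : s ∈ Set.Icc (0 : ℝ) 1) :
    Integrable (fun x => Real.exp (-s * llr P Pb x) * llr P Pb x) P := by
  have := measurable_llr P Pb
  refine (integrable_bound' hac' hac hfin hfin').mono' (Measurable.aestronglyMeasurable (by fun_prop))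
    (Eventually.of_forall fun x => ?_)
  rw [norm_mul, Real.norm_eq_abs, Real.norm_eq_abs, abs_of_pos (Real.exp_pos _)]
  exact mul_le_mul_of_nonneg_right (exp_bound hs _) (abs_nonneg _)

lemma tM_pos (hac' : Pb ≪ P) (hac : P ≪ Pb) {s : ℝ} (hs : s ∈ Set.Icc (0 : ℝ) 1) :
    0 < tM P Pb s := integral_exp_pos (integrable_exp_tilt hac' hac hs)

lemma tM_zero : tM P Pb 0 = 1 := by simp [tM]

lemma tM_one (hac' : Pb ≪ P) (hac : P ≪ Pb) : tM P Pb 1 = 1 := by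
  have : tM P Pb 1 = ∫ x, (Pb.rnDeriv P x).toReal ∂P := by
    refine integral_congr_ae ?_
    filter_upwards [exp_neg_llr hac] with x hx
    simpa using hx
  rw [this, Measure.integral_toReal_rnDeriv hac']
  simp

lemma continuousOn_tM (hac' : Pb ≪ P) (hac : P ≪ Pb) :
    ContinuousOn (tM P Pb) (Set.Icc 0 1) := by
  have := measurable_llr P Pb
  refine continuousOn_of_dominated (fun s _ => Measurable.aestronglyMeasurable (by fun_prop))
    (fun s hs => Eventually.of_forall fun x => ?_) (integrable_bound hac' hac)
    (Eventually.of_forall fun x => by fun_prop)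
  rw [Real.norm_eq_abs, abs_of_pos (Real.exp_pos _)]
  exact exp_bound hs _

lemma continuousOn_tN (hac' : Pb ≪ P) (hac : P ≪ Pb) (hfin : KLdiv P Pb ≠ ⊤)
    (hfin' : KLdiv Pb P ≠ ⊤) : ContinuousOn (tN P Pb) (Set.Icc 0 1) := by
  have := measurable_llr P Pb
  refine continuousOn_of_dominated (fun s _ => Measurable.aestronglyMeasurable (by fun_prop))
    (fun s hs => Eventually.of_forall fun x => ?_) (integrable_bound' hac' hac hfin hfin')
    (Eventually.of_forall fun x => by fun_prop)
  rw [norm_mul, Real.norm_eq_abs, Real.norm_eq_abs, abs_of_pos (Real.exp_pos _)]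
  exact mul_le_mul_of_nonneg_right (exp_bound hs _) (abs_nonneg _)

lemma KLdiv_tilt (hac' : Pb ≪ P) (hac : P ≪ Pb) (hfin : KLdiv P Pb ≠ ⊤)
    (hfin' : KLdiv Pb P ≠ ⊤) {s : ℝ} (hs : s ∈ Set.Icc (0 : ℝ) 1) :
    ∃ Q : Measure X, IsProbabilityMeasure Q ∧
      KLdiv Q P = ENNReal.ofReal (-s * (tN P Pb s / tM P Pb s) + -Real.log (tM P Pb s)) ∧
      KLdiv Q Pb = ENNReal.ofReal ((1 - s) * (tN P Pb s / tM P Pb s) + -Real.log (tM P Pb s)) := by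
  have hm := measurable_llr P Pb
  have hexp := integrable_exp_tilt hac' hac hs
  have hpos := tM_pos hac' hac hs
  set Q := P.tilted (fun x => -s * llr P Pb x) with hQ
  have hprob : IsProbabilityMeasure Q := isProbabilityMeasure_tilted hexp
  have hQP : Q ≪ P := tilted_absolutelyContinuous _ _
  have hQPb : Q ≪ Pb := hQP.trans hac
  have hLQ : Integrable (llr P Pb) Q := by
    rw [hQ, integrable_tilted_iff hexp]
    exact integrable_exp_tilt_mul hac' hac hfin hfin' hs
  have hmean : ∫ x, llr P Pb x ∂Q = tN P Pb s / tM P Pb s := by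
    rw [hQ, integral_tilted, tN, ← integral_div]
    refine integral_congr_ae (Eventually.of_forall fun x => ?_)
    simp only [smul_eq_mul, tM]
    ring
  refine ⟨Q, hprob, ?_, ?_⟩
  · rw [← hmean]
    refine KLdiv_of_affine Q P hQP _ hLQ _ _ ?_
    filter_upwards [hQP.ae_le (log_rnDeriv_tilted_left_self hexp)] with x hx
    rw [hx, tM]
    ring
  · rw [← hmean]
    refine KLdiv_of_affine Q Pb hQPb _ hLQ _ _ ?_
    filter_upwards [hQPb.ae_le (toReal_rnDeriv_tilted_left P (ν := Pb)
        (f := fun x => -s * llr P Pb x) (Measurable.aemeasurable (by fun_prop))),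
      hQPb.ae_le (exp_llr_of_ac' P Pb hac')] with x hx hx2
    rw [hx, ← hx2]
    change Real.log (Real.exp _ / tM P Pb s * _) = _
    rw [Real.log_mul (by positivity) (by positivity), Real.log_div (by positivity) hpos.ne',
      Real.log_exp, Real.log_exp]
    ring

lemma achievable_tilt (hac' : Pb ≪ P) (hac : P ≪ Pb) {s : ℝ} (hs : s ∈ Set.Ioc (0 : ℝ) 1) (r : ℝ) :
    rAchievable (fun n => Measure.pi fun _ : Fin n => P)
       (fun n => Measure.pi fun _ : Fin n => Pb) r
       ((1 - s) * (-(r + Real.log (tM P Pb s)) / s) - Real.log (tM P Pb s)) := by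
  have hs' : s ∈ Set.Icc (0 : ℝ) 1 := ⟨hs.1.le, hs.2⟩
  have hm := measurable_llr P Pb
  have hexp := integrable_exp_tilt hac' hac hs'
  set R := -(r + Real.log (tM P Pb s)) / s with hR
  have hr : r = -s * R - Real.log (tM P Pb s) := by
    have := hs.1.ne'
    rw [hR]; field_simp; ring
  have hexpL := exp_llr_of_ac' P Pb hac'
  have hae : (fun x => (P.rnDeriv Pb x).toReal • Real.exp (-s * llr P Pb x))
      =ᵐ[Pb] fun x => Real.exp ((1 - s) * llr P Pb x) := by
    filter_upwards [hexpL] with x hx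
    rw [← hx, smul_eq_mul, ← Real.exp_add]
    congr 1; ring
  have hint2 : Integrable (fun x => Real.exp ((1 - s) * llr P Pb x)) Pb :=
    ((integrable_rnDeriv_smul_iff hac).mpr hexp).congr hae
  have hval2 : ∫ x, Real.exp ((1 - s) * llr P Pb x) ∂Pb = tM P Pb s := by
    rw [← integral_congr_ae hae, integral_rnDeriv_smul hac, tM]
  refine ⟨fun n => {x | n * R < ∑ i, llr P Pb (x i)},
    fun n => measurableSet_lt (by fun_prop) (by fun_prop), ?_, ?_⟩
  · refine le_liminf_of_le (by isBoundedDefault) ?_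
    filter_upwards [eventually_gt_atTop 0] with n hn
    rw [le_expRate_iff hn, hr]
    refine (measure_mono ?_).trans
      (pi_chernoff P (fun x => -s * llr P Pb x) (by fun_prop) hexp (-s * R) n)
    intro x hx
    simp only [Set.mem_compl_iff, Set.mem_ofPred_eq, not_lt] at hx ⊢
    rw [← Finset.mul_sum]
    nlinarith [hs.1]
  · refine le_liminf_of_le (by isBoundedDefault) ?_
    filter_upwards [eventually_gt_atTop 0] with n hn
    rw [le_expRate_iff hn, ← hval2]
    refine (measure_mono ?_).trans
      (pi_chernoff Pb (fun x => (1 - s) * llr P Pb x) (by fun_prop) hint2 ((1 - s) * R) n)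
    intro x hx
    simp only [Set.mem_ofPred_eq] at hx ⊢
    rw [← Finset.mul_sum]
    nlinarith [hs.2]

lemma achievable_zero (r : ℝ) :
    rAchievable (fun n => Measure.pi fun _ : Fin n => P)
       (fun n => Measure.pi fun _ : Fin n => Pb) r 0 := by
  refine ⟨fun n => Set.univ, fun n => MeasurableSet.univ, ?_, ?_⟩
  · refine le_liminf_of_le (by isBoundedDefault) ?_
    filter_upwards [eventually_gt_atTop 0] with n hn
    rw [le_expRate_iff hn]
    simp
  · refine le_liminf_of_le (by isBoundedDefault) ?_
    filter_upwards [eventually_gt_atTop 0] with n hn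
    rw [le_expRate_iff hn]
    simp

end Tilt

/-- Abstract-alphabet Hoeffding theorem (eq. (3.39)): for mutually absolutely continuous
`P, P̄` with `D(P‖P̄) < ∞` and `D(P̄‖P) < ∞`, the i.i.d. hypothesis testing problem
`P^{⊗n}` vs `P̄^{⊗n}` satisfies `B_e(r) = inf { D(Q‖P̄) : D(Q‖P) < r }` for `r > 0`. -/
theorem hoeffding_error_exponent_abstract {X : Type*} [MeasurableSpace X]
    (P Pb : Measure X) [IsProbabilityMeasure P] [IsProbabilityMeasure Pb]
    (hac : P ≪ Pb) (hac' : Pb ≪ P)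
    (hfin : KLdiv P Pb ≠ ⊤) (hfin' : KLdiv Pb P ≠ ⊤) (r : ℝ) (hr : 0 < r) :
    Be (fun n => Measure.pi fun _ : Fin n => P)
       (fun n => Measure.pi fun _ : Fin n => Pb) r
      = sInf {x : EReal | ∃ Q : Measure X, IsProbabilityMeasure Q ∧
          KLdiv Q P < ENNReal.ofReal r ∧ x = ((KLdiv Q Pb : ℝ≥0∞) : EReal)} := by
  apply le_antisymm
  · -- converse
    refine sSup_le ?_
    rintro _ ⟨E, ⟨A, hA, hA1, hA2⟩, rfl⟩
    refine le_sInf ?_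
    rintro _ ⟨Q, hQ, hQr, rfl⟩
    have hQP : Q ≪ P ∧ Integrable (fun x => Real.log (Q.rnDeriv P x).toReal) Q := by
      by_contra h
      rw [KLdiv, if_neg h] at hQr
      exact not_top_lt hQr
    rw [KLdiv, if_pos hQP, ENNReal.ofReal_lt_ofReal_iff hr] at hQr
    by_cases hQPb : Q ≪ Pb ∧ Integrable (fun x => Real.log (Q.rnDeriv Pb x).toReal) Q
    · rw [KLdiv, if_pos hQPb, EReal.coe_ennreal_ofReal]
      refine EReal.coe_le_coe_iff.mpr (le_max_of_le_left ?_)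
      by_contra! hlt
      have h1 := converse_key P Q hQP.1 hQP.2 r hQr (fun n => (A n)ᶜ) (fun n => (hA n).compl) hA1
      have h2 := converse_key Pb Q hQPb.1 hQPb.2 E hlt A hA hA2
      have h3 := h2.add h1
      have h4 : ∀ n : ℕ, (Measure.pi fun _ : Fin n => Q) (A n)
          + (Measure.pi fun _ : Fin n => Q) (A n)ᶜ = 1 := fun n => by
        rw [measure_add_measure_compl (hA n), measure_univ]
      simp only [h4, add_zero] at h3
      exact one_ne_zero (tendsto_nhds_unique tendsto_const_nhds h3)
    · rw [KLdiv, if_neg hQPb]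
      simp
  · -- achievability
    set m : ℝ → ℝ := fun s => tN P Pb s / tM P Pb s with hm
    have hpos : ∀ s ∈ Set.Icc (0 : ℝ) 1, 0 < tM P Pb s := fun s hs => tM_pos hac' hac hs
    have hcm : ContinuousOn m (Set.Icc 0 1) :=
      (continuousOn_tN hac' hac hfin hfin').div (continuousOn_tM hac' hac)
        (fun s hs => (hpos s hs).ne')
    have hcl : ContinuousOn (fun s => -Real.log (tM P Pb s)) (Set.Icc 0 1) :=
      ((continuousOn_tM hac' hac).log (fun s hs => (hpos s hs).ne')).neg
    set D0 : ℝ → ℝ := fun s => -s * m s + -Real.log (tM P Pb s) with hD0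
    set D1 : ℝ → ℝ := fun s => (1 - s) * m s + -Real.log (tM P Pb s) with hD1
    have hc0 : ContinuousOn D0 (Set.Icc 0 1) := (continuousOn_id.neg.mul hcm).add hcl
    have hc1 : ContinuousOn D1 (Set.Icc 0 1) :=
      ((continuousOn_const.sub continuousOn_id).mul hcm).add hcl
    have hinf : ∀ s ∈ Set.Icc (0 : ℝ) 1, D0 s < r →
        sInf {x : EReal | ∃ Q : Measure X, IsProbabilityMeasure Q ∧
          KLdiv Q P < ENNReal.ofReal r ∧ x = ((KLdiv Q Pb : ℝ≥0∞) : EReal)}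
        ≤ ((max (D1 s) 0 : ℝ) : EReal) := by
      intro s hs hlt
      obtain ⟨Q, hQ, h0, h1⟩ := KLdiv_tilt hac' hac hfin hfin' hs
      refine sInf_le ⟨Q, hQ, ?_, ?_⟩
      · rw [h0, ENNReal.ofReal_lt_ofReal_iff hr]
        exact hlt
      · rw [h1, EReal.coe_ennreal_ofReal]
    have hBe0 : ((0 : ℝ) : EReal) ≤ Be (fun n => Measure.pi fun _ : Fin n => P)
       (fun n => Measure.pi fun _ : Fin n => Pb) r := le_sSup ⟨0, achievable_zero r, rfl⟩
    by_cases hall : ∀ s ∈ Set.Icc (0 : ℝ) 1, D0 s < r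
    · refine (hinf 1 (by simp) (hall 1 (by simp))).trans (le_of_eq_of_le ?_ hBe0)
      simp [hD1, tM_one hac' hac]
    · push Not at hall
      set S : Set ℝ := Set.Icc 0 1 ∩ D0 ⁻¹' Set.Ici r with hS
      have hSc : IsClosed S := hc0.preimage_isClosed_of_isClosed isClosed_Icc isClosed_Ici
      have hSne : S.Nonempty := by
        obtain ⟨s, hs, h⟩ := hall
        exact ⟨s, hs, h⟩
      have hSb : BddBelow S := ⟨0, fun s hs => hs.1.1⟩
      have ht := hSc.csInf_mem hSne hSb
      set t := sInf S with htdef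
      have hlt : ∀ s ∈ Set.Ico 0 t, D0 s < r := by
        intro s hs
        by_contra! h
        exact absurd (csInf_le hSb (show s ∈ S from ⟨⟨hs.1, hs.2.le.trans ht.1.2⟩, h⟩))
          (not_le.mpr hs.2)
      have htpos : 0 < t := by
        rcases ht.1.1.eq_or_lt with h | h
        · exfalso
          have h2 : r ≤ D0 t := ht.2
          rw [← h] at h2
          simp only [hD0, tM_zero, Real.log_one] at h2
          linarith
        · exact h
      have hne : (nhdsWithin t (Set.Ico 0 t)).NeBot := by
        rw [← mem_closure_iff_nhdsWithin_neBot, closure_Ico htpos.ne]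
        exact ⟨htpos.le, le_rfl⟩
      have hsub : Set.Ico 0 t ⊆ Set.Icc 0 1 := fun s hs => ⟨hs.1, hs.2.le.trans ht.1.2⟩
      have hl0 : Tendsto D0 (nhdsWithin t (Set.Ico 0 t)) (nhds (D0 t)) :=
        (hc0 t ht.1).mono hsub
      have hl1 : Tendsto D1 (nhdsWithin t (Set.Ico 0 t)) (nhds (D1 t)) :=
        (hc1 t ht.1).mono hsub
      have hDt : D0 t = r := by
        refine le_antisymm ?_ ht.2
        refine le_of_tendsto hl0 ?_
        filter_upwards [self_mem_nhdsWithin] with s hs using (hlt s hs).le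
      have hle : sInf {x : EReal | ∃ Q : Measure X, IsProbabilityMeasure Q ∧
          KLdiv Q P < ENNReal.ofReal r ∧ x = ((KLdiv Q Pb : ℝ≥0∞) : EReal)}
          ≤ ((max (D1 t) 0 : ℝ) : EReal) := by
        have hl2 := (continuous_coe_real_ereal.tendsto _).comp (hl1.max (tendsto_const_nhds (x := (0 : ℝ))))
        refine ge_of_tendsto hl2 ?_
        filter_upwards [self_mem_nhdsWithin] with s hs using hinf s (hsub hs) (hlt s hs)
      refine hle.trans ?_
      rcases max_choice (D1 t) 0 with h | h
      · rw [h]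
        refine le_sSup ⟨_, achievable_tilt hac' hac ⟨htpos, ht.1.2⟩ r, ?_⟩
        congr 1
        have : -(r + Real.log (tM P Pb t)) / t = m t := by
          rw [div_eq_iff htpos.ne', ← hDt]
          simp only [hD0]
          ring
        rw [this]
        simp only [hD1]
        ring
      · rw [h]
        exact hBe0
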